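/- Let 𝔽_q be a finite field with q elements and suppose the polynomial X² − X − 1 is irreducible over 𝔽_q. Then every sequence (x_n) with values in 𝔽_q satisfying the Fibonacci recurrence x_{n+2} = x_{n+1} + x_n for all n ≥ 0 is (q² − 1)-periodic, i.e. x_{n+q²−1} = x_n for all n ≥ 0. -/

import Mathlib

open Polynomial

/-!
The left shift `S` turns a linear recurrence into the equation `P(S) x = 0`, where `P` is its
characteristic polynomial, and `T`-periodicity into `(S ^ T - 1) x = 0`; so divisibility of
`X ^ T - 1` by `P` makes every solution `T`-periodic. Over a field with `q` elements, an
irreducible `P` of degree `d` divides `X ^ q ^ d - X = X * (X ^ (q ^ d - 1) - 1)`, hence divides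
`X ^ (q ^ d - 1) - 1` unless it is associated to `X`.
-/

section Shift

variable {R : Type*}

variable (R) in
/-- The left shift `x ↦ (n ↦ x (n + 1))` on sequences, as a linear endomorphism, so that
polynomials act on sequences through `Polynomial.aeval`. -/
def seqShift [CommSemiring R] : Module.End R (ℕ → R) :=
  LinearMap.funLeft R R (· + 1)

theorem seqShift_pow_apply [CommSemiring R] (k : ℕ) (x : ℕ → R) (n : ℕ) :
    (seqShift R ^ k) x n = x (n + k) := by
  induction k generalizing n with
  | zero => rfl
  | succ k ih =>
    calc (seqShift R ^ (k + 1)) x n = (seqShift R ^ k) x (n + 1) := by rw [pow_succ']; rfl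
      _ = x (n + (k + 1)) := by rw [ih, add_right_comm, add_assoc]

variable [CommRing R]

theorem aeval_seqShift_X_pow_sub_one_eq_zero_iff {x : ℕ → R} {T : ℕ} :
    aeval (seqShift R) (X ^ T - 1 : R[X]) x = 0 ↔ Function.Periodic x T := by
  simp [funext_iff, seqShift_pow_apply, sub_eq_zero, Function.Periodic]

theorem aeval_seqShift_charPoly_eq_zero_iff {E : LinearRecurrence R} {x : ℕ → R} :
    aeval (seqShift R) E.charPoly x = 0 ↔ E.IsSolution x := by
  simp [funext_iff, LinearRecurrence.charPoly, LinearRecurrence.IsSolution, aeval_monomial,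
    seqShift_pow_apply, sub_eq_zero]

theorem periodic_of_isSolution_of_charPoly_dvd {E : LinearRecurrence R} {x : ℕ → R} {T : ℕ}
    (hx : E.IsSolution x) (hdvd : E.charPoly ∣ X ^ T - 1) : Function.Periodic x T := by
  obtain ⟨g, hg⟩ := hdvd
  rw [← aeval_seqShift_X_pow_sub_one_eq_zero_iff, hg, mul_comm, map_mul, Module.End.mul_apply,
    aeval_seqShift_charPoly_eq_zero_iff.mpr hx, map_zero]

end Shift

section FiniteField

variable {F : Type*} [Field F] [Finite F]

theorem irreducible_dvd_X_pow_card_pow_sub_one {f : F[X]} {n : ℕ} (hirr : Irreducible f)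
    (hdeg : f.natDegree ∣ n) (hcoeff : f.coeff 0 ≠ 0) : f ∣ X ^ (Nat.card F ^ n - 1) - 1 := by
  have hcop : IsCoprime f X :=
    (irreducible_X.coprime_iff_not_dvd.mpr (mt X_dvd_iff.mp hcoeff)).symm
  have hfactor : (X ^ Nat.card F ^ n - X : F[X]) = X * (X ^ (Nat.card F ^ n - 1) - 1) := by
    rw [mul_sub, mul_one, mul_pow_sub_one (pow_ne_zero n Nat.card_pos.ne')]
  exact hcop.dvd_of_dvd_mul_left (hfactor ▸ hirr.natDegree_dvd_iff_dvd_X_pow_card_pow_sub_X.mp hdeg)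

theorem stmt16_general (E : LinearRecurrence F) (hirr : Irreducible E.charPoly)
    (hcoeff : E.charPoly.coeff 0 ≠ 0) {x : ℕ → F} (hx : E.IsSolution x) :
    Function.Periodic x (Nat.card F ^ E.order - 1) := by
  have hdeg : E.charPoly.natDegree = E.order :=
    natDegree_eq_of_degree_eq_some E.charPoly_degree_eq_order
  exact periodic_of_isSolution_of_charPoly_dvd hx
    (irreducible_dvd_X_pow_card_pow_sub_one hirr hdeg.dvd hcoeff)

end FiniteField

theorem isSolution_fibRec_iff {R : Type*} [CommSemiring R] {x : ℕ → R} :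
    Real.fibRec.IsSolution x ↔ ∀ n, x (n + 2) = x (n + 1) + x n := by
  have hsum (n : ℕ) :
      ∑ i, (Real.fibRec : LinearRecurrence R).coeffs i * x (n + i) = x (n + 1) + x n :=
    (Fin.sum_univ_two _).trans (by simp [Real.fibRec, add_comm])
  exact forall_congr' fun n => by rw [hsum]; rfl

/-- Let `F = 𝔽_q` be a finite field with `q` elements over which `X² - X - 1`
is irreducible.  Then every sequence with values in `F` satisfying the Fibonacci recurrence
`x_{n+2} = x_{n+1} + x_n` is `(q² - 1)`-periodic. -/
theorem stmt16 (F : Type*) [Field F] [Fintype F]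
    (hirr : Irreducible (X ^ 2 - X - 1 : F[X])) :
    ∀ x : ℕ → F, (∀ n, x (n + 2) = x (n + 1) + x n) →
      ∀ n, x (n + (Fintype.card F ^ 2 - 1)) = x n := by
  intro x hx
  rw [sub_sub, ← Real.fibRec_charPoly_eq] at hirr
  rw [← Nat.card_eq_fintype_card]
  exact stmt16_general Real.fibRec hirr (by simp [Real.fibRec_charPoly_eq])
    (isSolution_fibRec_iff.mpr hx)
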